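/- arXiv:1603.02212 — 2 statements merged into one kernel-verified Lean document; each statement's English description precedes it below -/
import Mathlib

section
/- (Skorokhod's lemma on a unique probability space and convergence.) Let ξ^n (n = 0,1,2,…) be ℝ^d-valued stochastic processes on [0,∞), defined on a common probability space, such that (i) for every T > 0, lim_{c→∞} sup_n sup_{t ≤ T} P(|ξ^n_t| > c) = 0, and (ii) for every T > 0 and ε > 0, lim_{h↓0} sup_n sup_{s,t ≤ T, |t−s| ≤ h} P(|ξ^n_t − ξ^n_s| > ε) = 0. Then there exist a subsequence n' → ∞, a probability space (Ω̃, F̃, P̃), and processes ξ̃^{n'} and ξ̃ on it such that for every n' all finite-dimensional distributions of ξ̃^{n'} coincide with those of ξ^{n'}, and for every ε > 0 and every t ≥ 0, P̃(|ξ̃^{n'}_t − ξ̃_t| > ε) → 0 as n' → ∞. -/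
/-!
The restriction of `ξ n` to the nonnegative rationals determines `ξ n t` almost surely for every
`t ≥ 0`: by stochastic continuity `ξ n t = F n t ((ξ n q)_q)` a.s. for a measurable map `F n t`
(`exists_factor_through_rationals`). It therefore suffices to couple the rational paths, which are
random elements of the countable product `ℚ≥0 → ℝ^d`, and to apply `F n t` to the coupled paths.

The coupling lives on `(0, 1)` with Lebesgue measure. A path is coded by the bits
`1{q < x_t^i}`, `q` rational, and the bit sequence is placed in the ternary Cantor set; this is a
measurable embedding into `[0, 1]`, and convergence of codes forces every bit to stabilise
(`exists_code`). The quantile functions of the coded laws are monotone with values in `[0, 1]`, so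
by Helly's selection theorem a subsequence of them converges almost everywhere
(`helly_selection`). Decoding yields copies `X n` of the rational paths all of whose bits
stabilise almost surely (`exists_coupling`). Stabilised bits mean that each coordinate converges
in the extended reals, and boundedness in probability rules out infinite limits
(`ae_tendsto_of_tight`). No weak convergence or continuity-set argument is needed.

Hence the copies converge in probability at rational times. By the uniform stochastic continuity
they are Cauchy in probability at every `t ≥ 0`, and convergence in probability is complete
(`exists_limit_in_probability`).
-/

open MeasureTheory Filter
open ProbabilityTheory Set Topology

/-! ### Quantile functions and Helly selection -/

/-- The quantile function `Q u = inf {x ∈ [0, 1] | u ≤ F x}` of a law on `[0, 1]` is monotone and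
transports Lebesgue measure on `(0, 1)` to that law. The point `1` is adjoined to the set so that
`Q` is monotone on the whole line. -/
lemma exists_monotone_quantile (ν : Measure ℝ) [IsProbabilityMeasure ν]
    (hν : ν (Icc 0 1)ᶜ = 0) :
    ∃ Q : ℝ → ℝ, Monotone Q ∧ (∀ u, Q u ∈ Icc (0 : ℝ) 1) ∧
      (volume.restrict (Ioo (0 : ℝ) 1)).map Q = ν := by
  set F := cdf ν with hF
  set S : ℝ → Set ℝ := fun u => {x | x ∈ Icc (0 : ℝ) 1 ∧ (u ≤ F x ∨ x = 1)} with hS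
  have hS1 : ∀ u, (1 : ℝ) ∈ S u := fun u => ⟨by simp, Or.inr rfl⟩
  have hSb : ∀ u, BddBelow (S u) := fun u => ⟨0, fun x hx => hx.1.1⟩
  have hmono : Monotone fun u => sInf (S u) := fun u v huv =>
    csInf_le_csInf (hSb u) ⟨1, hS1 v⟩ fun x hx => ⟨hx.1, hx.2.imp_left huv.trans⟩
  have hQ0 : ∀ u, 0 ≤ sInf (S u) := fun u => le_csInf ⟨1, hS1 u⟩ fun x hx => hx.1.1
  have hF0 : ∀ x < 0, F x = 0 := fun x hx => by
    have hsub : Iic x ⊆ (Icc (0 : ℝ) 1)ᶜ := fun y hy h =>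
      absurd (h.1.trans (mem_Iic.1 hy)) (not_le.2 hx)
    have : ν (Iic x) = 0 := measure_mono_null hsub hν
    rw [hF, cdf_eq_real, measureReal_def, this]; simp
  have hF1 : ∀ x, 1 ≤ x → F x = 1 := fun x hx => by
    have : ν (Iic x) = 1 := by
      rw [prob_compl_eq_zero_iff measurableSet_Icc] at hν
      exact le_antisymm prob_le_one (hν ▸ measure_mono fun y hy => hy.2.trans hx)
    rw [hF, cdf_eq_real, measureReal_def, this]; simp
  have key : ∀ u ∈ Ioo (0 : ℝ) 1, ∀ x, sInf (S u) ≤ x ↔ u ≤ F x := by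
    intro u hu x
    rcases lt_or_ge x 0 with hx | hx
    · rw [hF0 x hx]
      constructor
      · intro h; linarith [hQ0 u]
      · intro h; linarith [hu.1]
    rcases le_or_gt 1 x with hx1 | hx1
    · rw [hF1 x hx1]
      exact ⟨fun _ => hu.2.le, fun _ => (csInf_le (hSb u) (hS1 u)).trans hx1⟩
    refine ⟨fun h => ?_, fun h => csInf_le (hSb u) ⟨⟨hx, hx1.le⟩, Or.inl h⟩⟩
    by_contra! hlt
    -- right-continuity of the distribution function pushes the strict inequality past `x`
    have hr : ∀ᶠ y in 𝓝[>] x, F y < u :=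
      ((F.right_continuous x).tendsto.mono_left (nhdsWithin_mono _ Ioi_subset_Ici_self)).eventually
        (gt_mem_nhds hlt)
    obtain ⟨y, ⟨hyu, hy1⟩, hxy⟩ :=
      ((hr.and (mem_nhdsWithin_of_mem_nhds (gt_mem_nhds hx1))).and self_mem_nhdsWithin).exists
    have : y ≤ sInf (S u) := le_csInf ⟨1, hS1 u⟩ fun z hz => by
      by_contra! hzy
      rcases hz.2 with h2 | h2
      · linarith [F.mono hzy.le]
      · exact absurd (h2 ▸ hzy) (not_lt.2 (le_of_lt hy1))
    exact absurd (this.trans h) (not_le.2 hxy)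
  refine ⟨_, hmono, fun u => ⟨hQ0 u, csInf_le (hSb u) (hS1 u)⟩, ?_⟩
  have : IsProbabilityMeasure (volume.restrict (Ioo (0 : ℝ) 1)) := ⟨by simp⟩
  have := Measure.isProbabilityMeasure_map (μ := volume.restrict (Ioo (0 : ℝ) 1))
    hmono.measurable.aemeasurable
  refine Measure.ext_of_Iic _ _ fun x => ?_
  rw [Measure.map_apply hmono.measurable measurableSet_Iic,
    Measure.restrict_apply (hmono.measurable measurableSet_Iic), ← ofReal_cdf]
  have h1 : (fun u => sInf (S u)) ⁻¹' Iic x ∩ Ioo 0 1 = Ioo 0 1 ∩ Iic (F x) := by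
    ext u
    simp only [mem_inter_iff, mem_preimage, mem_Iic]
    rw [and_comm]
    exact and_congr_right fun hu => key u hu x
  rw [h1]
  have hsub₁ : Ioo 0 1 ∩ Iic (F x) ⊆ Ioc 0 (F x) := fun u hu => ⟨hu.1.1, hu.2⟩
  have hsub₂ : Ioo 0 (F x) ⊆ Ioo 0 1 ∩ Iic (F x) := fun u hu =>
    ⟨⟨hu.1, hu.2.trans_le (cdf_le_one ν x)⟩, hu.2.le⟩
  refine le_antisymm ?_ ?_
  · calc volume (Ioo 0 1 ∩ Iic (F x)) ≤ volume (Ioc (0 : ℝ) (F x)) :=measure_mono hsub₁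
      _ = _ := by rw [Real.volume_Ioc, sub_zero]
  · calc ENNReal.ofReal (F x) = volume (Ioo 0 (F x)) := by rw [Real.volume_Ioo, sub_zero]
      _ ≤ _ := measure_mono hsub₂

/-- Helly's selection theorem. A diagonal subsequence converges at all rationals, which gives
`limsup ≤ L v` to the left of `v` for the monotone function `L = liminf`; hence convergence at
every continuity point of `L`. -/
lemma helly_selection (Q : ℕ → ℝ → ℝ) (hm : ∀ n, Monotone (Q n))
    (hQ : ∀ n u, Q n u ∈ Icc (0 : ℝ) 1) :
    ∃ φ : ℕ → ℕ, StrictMono φ ∧ ∀ᵐ u, ∃ r, Tendsto (fun n => Q (φ n) u) atTop (𝓝 r) := by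
  obtain ⟨G, φ, hφ, hG⟩ := CompactSpace.tendsto_subseq
    (fun n (q : ℚ) => (⟨Q n q, hQ n q⟩ : Icc (0 : ℝ) 1))
  refine ⟨φ, hφ, ?_⟩
  have hGq : ∀ q : ℚ, Tendsto (fun n => Q (φ n) q) atTop (𝓝 (G q : ℝ)) := fun q =>
    (continuous_subtype_val.tendsto _).comp ((tendsto_pi_nhds.1 hG) q)
  have hle : ∀ u, IsBoundedUnder (· ≤ ·) atTop fun n => Q (φ n) u := fun u =>
    isBoundedUnder_of ⟨1, fun n => (hQ _ u).2⟩
  have hge : ∀ u, IsBoundedUnder (· ≥ ·) atTop fun n => Q (φ n) u := fun u =>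
    isBoundedUnder_of ⟨0, fun n => (hQ _ u).1⟩
  set L : ℝ → ℝ := fun u => liminf (fun n => Q (φ n) u) atTop with hL
  have hLm : Monotone L := fun u v huv =>
    liminf_le_liminf (Eventually.of_forall fun n => hm _ huv) (hge u) (hle v).isCoboundedUnder_ge
  have hUL : ∀ u v, u < v → limsup (fun n => Q (φ n) u) atTop ≤ L v := by
    intro u v huv
    obtain ⟨q, huq, hqv⟩ := exists_rat_btwn huv
    calc limsup (fun n => Q (φ n) u) atTop ≤ limsup (fun n => Q (φ n) q) atTop :=
          limsup_le_limsup (Eventually.of_forall fun n => hm _ huq.le)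
            (hge u).isCoboundedUnder_le (hle q)
      _ = L q := by rw [(hGq q).limsup_eq, hL]; exact (hGq q).liminf_eq.symm
      _ ≤ L v := hLm hqv.le
  have hc : ∀ᵐ u, ContinuousAt L u := hLm.countable_not_continuousAt.measure_zero volume
  filter_upwards [hc] with u hu
  refine ⟨L u, tendsto_of_le_liminf_of_limsup_le le_rfl ?_ (hle u) (hge u)⟩
  exact ge_of_tendsto (hu.tendsto.mono_left nhdsWithin_le_nhds)
    (eventually_mem_nhdsWithin.mono fun v (hv : v ∈ Ioi u) => hUL u v hv)

/-! ### The coupling of countably indexed families -/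

/-- A countable family of vectors can be coded by a number in `[0, 1]` so that convergence of codes
forces each comparison of a coordinate with a rational to be eventually constant. The limit of the
codes need not itself be a code. -/
lemma exists_code (ι : Type) [Countable ι] (d : ℕ) :
    ∃ g : (ι → EuclideanSpace ℝ (Fin d)) → ℝ, MeasurableEmbedding g ∧
      (∀ x, g x ∈ Icc (0 : ℝ) 1) ∧
      ∀ (x : ℕ → ι → EuclideanSpace ℝ (Fin d)) (r : ℝ),
        Tendsto (fun n => g (x n)) atTop (𝓝 r) → ∀ (t : ι) (i : Fin d) (q : ℚ),
          (∀ᶠ n in atTop, (q : ℝ) < x n t i) ∨ ∀ᶠ n in atTop, x n t i ≤ q := by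
  classical
  have := Encodable.ofCountable (ι × Fin d × ℚ)
  let b : (ι → EuclideanSpace ℝ (Fin d)) → ℕ → Bool := fun x m =>
    match Encodable.decode (α := ι × Fin d × ℚ) m with
    | none => false
    | some p => decide ((p.2.2 : ℝ) < x p.1 p.2.1)
  have hb : ∀ x (p : ι × Fin d × ℚ),
      b x (Encodable.encode p) = decide ((p.2.2 : ℝ) < x p.1 p.2.1) := fun x p => by
    simp [b, Encodable.encodek]
  have hbm : Measurable b := by
    refine measurable_pi_lambda _ fun m => ?_
    simp only [b]
    rcases Encodable.decode (α := ι × Fin d × ℚ) m with _ | p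
    · exact measurable_const
    · refine measurable_to_bool ?_
      have : MeasurableSet {x : ι → EuclideanSpace ℝ (Fin d) | (p.2.2 : ℝ) < x p.1 p.2.1} :=
        measurableSet_lt measurable_const (by fun_prop)
      convert this using 1
      ext x
      simp
  have hbi : Function.Injective b := by
    intro x y hxy
    funext t
    ext i
    refine eq_of_forall_rat_lt_iff_lt fun q => ?_
    have := congrFun hxy (Encodable.encode (t, i, q))
    rw [hb, hb] at this
    simpa using this
  let e := cantorSetHomeomorphNatToBool
  have hgi : Function.Injective fun x => ((e.symm (b x) : cantorSet) : ℝ) :=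
    Subtype.val_injective.comp (e.symm.injective.comp hbi)
  have hgm : Measurable fun x => ((e.symm (b x) : cantorSet) : ℝ) :=
    measurable_subtype_coe.comp (e.symm.continuous.measurable.comp hbm)
  refine ⟨_, hgm.measurableEmbedding hgi,
    fun x => cantorSet_subset_unitInterval (e.symm (b x)).2, fun x r hr t i q => ?_⟩
  have hrC : r ∈ cantorSet :=
    isClosed_cantorSet.mem_of_tendsto hr (Eventually.of_forall fun n => (e.symm (b (x n))).2)
  have h1 : Tendsto (fun n => e.symm (b (x n))) atTop (𝓝 ⟨r, hrC⟩) :=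
    tendsto_subtype_rng.2 hr
  have h2 : Tendsto (fun n => b (x n)) atTop (𝓝 (e ⟨r, hrC⟩)) := by
    simpa [Function.comp_def] using (e.continuous.tendsto _).comp h1
  have h3 := tendsto_pi_nhds.1 h2 (Encodable.encode (t, i, q))
  rw [nhds_discrete, tendsto_pure] at h3
  simp only [hb] at h3
  cases h : e ⟨r, hrC⟩ (Encodable.encode (t, i, q)) with
  | true => left; filter_upwards [h3] with n hn; simpa [h] using hn
  | false => right; filter_upwards [h3] with n hn; simpa [h] using hn
/-- Along a subsequence, arbitrary laws on a countable product of `ℝ^d` can be realised on `(0, 1)`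
in such a way that almost surely each coordinate converges in `[-∞, ∞]`, expressed here by the
stabilisation of its comparisons with the rationals. -/
lemma exists_coupling (ι : Type) [Countable ι] (d : ℕ)
    (μ : ℕ → Measure (ι → EuclideanSpace ℝ (Fin d))) [∀ n, IsProbabilityMeasure (μ n)] :
    ∃ φ : ℕ → ℕ, StrictMono φ ∧ ∃ X : ℕ → ℝ → ι → EuclideanSpace ℝ (Fin d),
      (∀ n, Measurable (X n)) ∧
      (∀ n, (volume.restrict (Ioo (0 : ℝ) 1)).map (X n) = μ (φ n)) ∧
      ∀ᵐ u ∂(volume.restrict (Ioo (0 : ℝ) 1)), ∀ (t : ι) (i : Fin d) (q : ℚ),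
          (∀ᶠ n in atTop, (q : ℝ) < X n u t i) ∨ ∀ᶠ n in atTop, X n u t i ≤ q := by
  obtain ⟨g, hg, hg01, hgc⟩ := exists_code ι d
  have hprob : ∀ n, IsProbabilityMeasure ((μ n).map g) := fun n =>
    Measure.isProbabilityMeasure_map hg.measurable.aemeasurable
  have hsupp : ∀ n, (μ n).map g (Icc 0 1)ᶜ = 0 := fun n => by
    rw [Measure.map_apply hg.measurable measurableSet_Icc.compl]
    convert measure_empty (μ := μ n)
    ext x
    simpa using hg01 x
  choose Q hQm hQ01 hQlaw using fun n => exists_monotone_quantile ((μ n).map g) (hsupp n)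
  obtain ⟨φ, hφ, hconv⟩ := helly_selection Q hQm hQ01
  have hinv : ∀ x, hg.invFun (g x) = x := hg.leftInverse_invFun
  refine ⟨φ, hφ, fun n u => hg.invFun (Q (φ n) u),
    fun n => hg.measurable_invFun.comp (hQm _).measurable, fun n => ?_, ?_⟩
  · have h := Measure.map_map (μ := volume.restrict (Ioo (0 : ℝ) 1)) hg.measurable_invFun
      (hQm (φ n)).measurable
    rw [hQlaw, Measure.map_map hg.measurable_invFun hg.measurable] at h
    have hid : hg.invFun ∘ g = id := funext hinv
    rw [hid, Measure.map_id] at h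
    exact h.symm
  · -- the quantile functions take almost all their values in the range of the code
    have hrange : ∀ n, ∀ᵐ u ∂(volume.restrict (Ioo (0 : ℝ) 1)),
        g (hg.invFun (Q (φ n) u)) = Q (φ n) u := by
      intro n
      have h1 : ∀ᵐ y ∂(μ (φ n)).map g, y ∈ range g :=
        (ae_map_mem_range g hg.measurableSet_range _)
      rw [← hQlaw] at h1
      filter_upwards [ae_of_ae_map (hQm (φ n)).measurable.aemeasurable h1] with u hu
      obtain ⟨x, hx⟩ := hu
      rw [← hx, hinv]
    filter_upwards [ae_restrict_of_ae hconv, ae_all_iff.2 hrange] with u ⟨r, hr⟩ hu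
    exact hgc _ r (by simpa only [hu] using hr)

/-- If all comparisons of the coordinates with rationals stabilise, then boundedness in probability
upgrades convergence in the extended reals to genuine convergence. -/
lemma ae_tendsto_of_tight {Ω' : Type*} [MeasurableSpace Ω'] (P' : Measure Ω')
    [IsProbabilityMeasure P'] {d : ℕ} (Y : ℕ → Ω' → EuclideanSpace ℝ (Fin d))
    (htight : ∀ ε > (0 : ℝ), ∃ c : ℝ, ∀ n, P'.real {u | c < ‖Y n u‖} < ε)
    (hY : ∀ᵐ u ∂P', ∀ (i : Fin d) (q : ℚ),
      (∀ᶠ n in atTop, (q : ℝ) < Y n u i) ∨ ∀ᶠ n in atTop, Y n u i ≤ q) :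
    ∀ᵐ u ∂P', ∃ y, Tendsto (fun n => Y n u) atTop (𝓝 y) := by
  -- tightness excludes escape to infinity, up to a null set
  have hesc : ∀ᵐ u ∂P', ∃ c : ℝ, ∃ᶠ n in atTop, ‖Y n u‖ ≤ c := by
    have hsmall : ∀ ε > (0 : ℝ), P'.real {u | ¬ ∃ c : ℝ, ∃ᶠ n in atTop, ‖Y n u‖ ≤ c} ≤ ε := by
      intro ε hε
      obtain ⟨c, hc⟩ := htight ε hε
      have hsub : {u | ¬ ∃ c : ℝ, ∃ᶠ n in atTop, ‖Y n u‖ ≤ c} ⊆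
          ⋃ N : ℕ, ⋂ n ∈ Ici N, {u | c < ‖Y n u‖} := by
        intro u hu
        have hu' : ¬ ∃ c : ℝ, ∃ᶠ n in atTop, ‖Y n u‖ ≤ c := hu
        push Not at hu'
        obtain ⟨N, hN⟩ := eventually_atTop.1 (hu' c)
        exact mem_iUnion.2 ⟨N, mem_iInter₂.2 fun n hn => hN n hn⟩
      have hmon : Monotone fun N : ℕ => ⋂ n ∈ Ici N, {u | c < ‖Y n u‖} := fun a b hab =>
        biInter_mono (Ici_subset_Ici.2 hab) fun _ _ => Subset.rfl
      have hle : P' (⋃ N : ℕ, ⋂ n ∈ Ici N, {u | c < ‖Y n u‖}) ≤ ENNReal.ofReal ε := by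
        rw [hmon.measure_iUnion]
        refine iSup_le fun N => ?_
        refine (measure_mono (biInter_subset_of_mem (mem_Ici.2 le_rfl))).trans ?_
        rw [← ofReal_measureReal]
        exact ENNReal.ofReal_le_ofReal (hc N).le
      exact ENNReal.toReal_le_of_le_ofReal hε.le ((measure_mono hsub).trans hle)
    have h0 := le_of_forall_pos_le_add (fun ε hε => (hsmall ε hε).trans_eq (zero_add ε).symm)
    exact (measureReal_eq_zero_iff).1 (le_antisymm h0 measureReal_nonneg)
  filter_upwards [hY, hesc] with u hu ⟨c, hc⟩
  have hcoord : ∀ i, ∃ y, Tendsto (fun n => Y n u i) atTop (𝓝 y) := by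
    intro i
    have habs : ∃ᶠ n in atTop, |Y n u i| ≤ c := hc.mono fun n hn =>
      (PiLp.norm_apply_le (Y n u) i).trans hn
    refine tendsto_of_no_upcrossings (s := range ((↑) : ℚ → ℝ)) Rat.denseRange_cast ?_ ?_ ?_
    · rintro _ ⟨a, rfl⟩ _ ⟨b, rfl⟩ hab ⟨h1, h2⟩
      rcases hu i a with h | h
      · obtain ⟨n, hn1, hn2⟩ := (h1.and_eventually h).exists
        exact lt_asymm hn1 hn2
      · obtain ⟨n, hn1, hn2⟩ := (h2.and_eventually h).exists
        exact absurd (hn1.trans_le hn2) (not_lt.2 hab.le)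
    · obtain ⟨q, hq⟩ := exists_rat_gt c
      rcases hu i q with h | h
      · obtain ⟨n, hn1, hn2⟩ := (habs.and_eventually h).exists
        linarith [le_abs_self (Y n u i)]
      · exact isBoundedUnder_of_eventually_le h
    · obtain ⟨q, hq⟩ := exists_rat_lt (-c)
      rcases hu i q with h | h
      · exact isBoundedUnder_of_eventually_ge (h.mono fun n hn => hn.le)
      · obtain ⟨n, hn1, hn2⟩ := (habs.and_eventually h).exists
        linarith [neg_abs_le (Y n u i)]
  choose y hy using hcoord
  refine ⟨WithLp.toLp 2 y, ?_⟩
  have := ((PiLp.continuous_toLp 2 (fun _ : Fin d => ℝ)).tendsto y).comp (tendsto_pi_nhds.2 hy)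
  exact this

/-! ### Convergence in probability -/

/-- Completeness of convergence in probability: a Cauchy sequence has a subsequence that is almost
surely Cauchy by Borel–Cantelli, and its limit is a limit in probability of the whole sequence. -/
lemma exists_limit_in_probability {Ω' E : Type*} [MeasurableSpace Ω'] (P' : Measure Ω')
    [IsProbabilityMeasure P'] [NormedAddCommGroup E] [CompleteSpace E] (f : ℕ → Ω' → E)
    (hf : ∀ n, AEStronglyMeasurable (f n) P')
    (hC : ∀ ε > (0 : ℝ), ∀ δ > (0 : ℝ), ∃ N : ℕ, ∀ n ≥ N, ∀ m ≥ N,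
      P'.real {u | ε < ‖f n u - f m u‖} < δ) :
    ∃ g : Ω' → E, ∀ ε > (0 : ℝ), Tendsto (fun n => P'.real {u | ε < ‖f n u - g u‖}) atTop (𝓝 0) := by
  have hpos : ∀ k : ℕ, (0 : ℝ) < (1 / 2) ^ k := fun k => by positivity
  choose N hN using fun k : ℕ => hC ((1 / 2) ^ k) (hpos k) ((1 / 2) ^ k) (hpos k)
  -- the summand `k` makes `ψ` tend to infinity, the supremum makes it dominate `N`
  let ψ : ℕ → ℕ := fun k => k + (Finset.range (k + 1)).sup N
  have hψN : ∀ j k, j ≤ k → N j ≤ ψ k := fun j k hjk =>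
    (Finset.le_sup (f := N) (Finset.mem_range.2 (by omega))).trans (Nat.le_add_left _ _)
  have hψ : ∀ k, k ≤ ψ k := fun k => Nat.le_add_right _ _
  have hBC : ∀ᵐ u ∂P', ∀ᶠ k in atTop,
      u ∉ {u | (1 / 2 : ℝ) ^ k < ‖f (ψ k) u - f (ψ (k + 1)) u‖} := by
    refine ae_eventually_notMem (ne_top_of_le_ne_top
      (b := ∑' k : ℕ, ENNReal.ofReal ((1 / 2 : ℝ) ^ k)) ?_ (ENNReal.tsum_le_tsum fun k => ?_))
    · rw [← ENNReal.ofReal_tsum_of_nonneg (fun k => (hpos k).le) summable_geometric_two]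
      exact ENNReal.ofReal_ne_top
    · rw [← ofReal_measureReal]
      exact ENNReal.ofReal_le_ofReal (hN k _ (hψN k k le_rfl) _ (hψN k (k + 1) (by omega))).le
  have hlim : ∀ᵐ u ∂P', ∃ y, Tendsto (fun k => f (ψ k) u) atTop (𝓝 y) := by
    filter_upwards [hBC] with u hu
    obtain ⟨K, hK⟩ := eventually_atTop.1 hu
    have hc : CauchySeq fun k => f (ψ (k + K)) u := by
      refine cauchySeq_of_le_geometric (1 / 2) 1 (by norm_num) fun k => ?_
      have h1 : ‖f (ψ (k + K)) u - f (ψ (k + K + 1)) u‖ ≤ (1 / 2) ^ (k + K) :=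
        not_lt.1 (hK (k + K) (by omega))
      rw [dist_eq_norm, one_mul, show k + 1 + K = k + K + 1 by omega]
      exact h1.trans (pow_le_pow_of_le_one (by norm_num) (by norm_num) (by omega))
    obtain ⟨y, hy⟩ := cauchySeq_tendsto_of_complete hc
    exact ⟨y, (tendsto_add_atTop_iff_nat K).1 hy⟩
  let g : Ω' → E := fun u => limUnder atTop fun k => f (ψ k) u
  have hg : TendstoInMeasure P' (fun k => f (ψ k)) atTop g :=
    tendstoInMeasure_of_tendsto_ae (fun k => hf _) (hlim.mono fun u hu => tendsto_nhds_limUnder hu)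
  rw [tendstoInMeasure_iff_measureReal_norm] at hg
  refine ⟨g, fun ε hε => ?_⟩
  rw [Metric.tendsto_atTop]
  intro δ hδ
  obtain ⟨M, hM⟩ := hC (ε / 2) (by positivity) (δ / 2) (by positivity)
  refine ⟨M, fun n hn => ?_⟩
  rw [Real.dist_eq, sub_zero, abs_of_nonneg measureReal_nonneg]
  obtain ⟨k, hk1, hk2⟩ := (((hg (ε / 2) (by positivity)).eventually
    (gt_mem_nhds (show (0 : ℝ) < δ / 2 by positivity))).and (eventually_ge_atTop M)).exists
  have hsub : {u | ε < ‖f n u - g u‖} ⊆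
      {u | ε / 2 < ‖f n u - f (ψ k) u‖} ∪ {u | ε / 2 ≤ ‖f (ψ k) u - g u‖} := by
    intro u hu
    have hu' : ε < ‖f n u - g u‖ := hu
    by_contra h
    rw [mem_union, not_or] at h
    have h1 : ‖f n u - f (ψ k) u‖ ≤ ε / 2 := not_lt.1 h.1
    have h2 : ‖f (ψ k) u - g u‖ < ε / 2 := not_le.1 h.2
    linarith [norm_sub_le_norm_sub_add_norm_sub (f n u) (f (ψ k) u) (g u)]
  calc P'.real {u | ε < ‖f n u - g u‖} ≤ _ := measureReal_mono hsub
    _ ≤ _ := measureReal_union_le _ _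
    _ < δ / 2 + δ / 2 := add_lt_add (hM n hn _ (hk2.trans (hψ k))) hk1
    _ = δ := add_halves δ

/-- A process that is right-continuous in probability at `t` has its value at `t` given, almost
surely, by a measurable function of its values at rational times. -/
lemma exists_factor_through_rationals {Ω : Type*} [MeasurableSpace Ω] (P : Measure Ω)
    [IsProbabilityMeasure P] {d : ℕ} (η : ℝ → Ω → EuclideanSpace ℝ (Fin d)) (t : ℝ) (ht : 0 ≤ t)
    (hc : ∀ ε > (0 : ℝ), ∃ h > (0 : ℝ), ∀ s ∈ Icc t (t + h),
      P.real {ω | ε < ‖η s ω - η t ω‖} < ε) :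
    ∃ F : (ℚ≥0 → EuclideanSpace ℝ (Fin d)) → EuclideanSpace ℝ (Fin d), Measurable F ∧
      ∀ᵐ ω ∂P, F (fun q => η q ω) = η t ω := by
  have hpos : ∀ k : ℕ, (0 : ℝ) < 1 / (k + 1) := fun k => by positivity
  have hq : ∀ k : ℕ, ∃ q : ℚ≥0,
      P.real {ω | 1 / ((k : ℝ) + 1) < ‖η q ω - η t ω‖} < 1 / (k + 1) := by
    intro k
    obtain ⟨h, hh, hs⟩ := hc _ (hpos k)
    obtain ⟨q, hq1, hq2⟩ := exists_rat_btwn (show t < t + h by linarith)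
    have hq0 : (0 : ℚ) ≤ q := by exact_mod_cast ht.trans hq1.le
    refine ⟨⟨q, hq0⟩, hs _ ?_⟩
    exact ⟨hq1.le, hq2.le⟩
  choose q hq using hq
  have hm : TendstoInMeasure P (fun k : ℕ => η (q k)) atTop (η t) := by
    rw [tendstoInMeasure_iff_measureReal_norm]
    intro ε hε
    have h0 := tendsto_one_div_add_atTop_nhds_zero_nat (𝕜 := ℝ)
    refine squeeze_zero' (Eventually.of_forall fun k => measureReal_nonneg) ?_ h0
    filter_upwards [h0.eventually (gt_mem_nhds hε)] with k hk
    have hsub : {ω | ε ≤ ‖η (q k) ω - η t ω‖} ⊆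
        {ω | 1 / ((k : ℝ) + 1) < ‖η (q k) ω - η t ω‖} := fun ω hω => hk.trans_le hω
    exact (measureReal_mono hsub).trans (hq k).le
  obtain ⟨ns, -, hns⟩ := hm.exists_seq_tendsto_ae
  refine ⟨fun x => limUnder atTop fun k => x (q (ns k)), ?_, ?_⟩
  · exact (StronglyMeasurable.limUnder fun k =>
      (measurable_pi_apply (q (ns k))).stronglyMeasurable).measurable
  · filter_upwards [hns] with ω hω
    exact hω.limUnder_eq

/-- Skorokhod's lemma on a unique probability space and convergence in probability:
given `ℝ^d`-valued processes `ξ^n` on `[0,∞)` on a common probability space that are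
uniformly bounded in probability and uniformly stochastically continuous (uniformly in `n`),
there exist a subsequence `n'`, a new probability space, and processes `ξ̃^{n'}`, `ξ̃` on it
such that the finite-dimensional distributions of `ξ̃^{n'}` coincide with those of `ξ^{n'}`,
and `ξ̃^{n'}_t → ξ̃_t` in probability for every `t ≥ 0`. -/
theorem stmt_2 {d : ℕ}
    {Ω : Type} [MeasurableSpace Ω] (P : Measure Ω) [IsProbabilityMeasure P]
    (ξ : ℕ → ℝ → Ω → EuclideanSpace ℝ (Fin d))
    (hmeas : ∀ n, ∀ t, 0 ≤ t → Measurable (ξ n t))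
    (hbdd : ∀ T > (0:ℝ), ∀ ε > (0:ℝ), ∃ c : ℝ, ∀ n, ∀ t ∈ Set.Icc (0:ℝ) T,
      (P {ω | c < ‖ξ n t ω‖}).toReal < ε)
    (hcont : ∀ T > (0:ℝ), ∀ ε > (0:ℝ), ∀ δ > (0:ℝ), ∃ h > (0:ℝ),
      ∀ n, ∀ s ∈ Set.Icc (0:ℝ) T, ∀ t ∈ Set.Icc (0:ℝ) T, |t - s| ≤ h →
      (P {ω | ε < ‖ξ n t ω - ξ n s ω‖}).toReal < δ) :
    ∃ (φ : ℕ → ℕ), StrictMono φ ∧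
    ∃ (Ω' : Type) (_ : MeasurableSpace Ω') (P' : Measure Ω'),
      IsProbabilityMeasure P' ∧
      ∃ (ξ' : ℕ → ℝ → Ω' → EuclideanSpace ℝ (Fin d))
        (ξlim : ℝ → Ω' → EuclideanSpace ℝ (Fin d)),
        (∀ n, ∀ k : ℕ, ∀ times : Fin k → ℝ, (∀ i, 0 ≤ times i) →
          P.map (fun ω => fun i : Fin k => ξ (φ n) (times i) ω)
            = P'.map (fun ω' => fun i : Fin k => ξ' n (times i) ω')) ∧
        (∀ ε > (0:ℝ), ∀ t : ℝ, 0 ≤ t →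
          Tendsto (fun n => (P' {ω' | ε < ‖ξ' n t ω' - ξlim t ω'‖}).toReal)
            atTop (nhds 0)) := by
  have hF : ∀ n t, ∃ F : (ℚ≥0 → EuclideanSpace ℝ (Fin d)) → EuclideanSpace ℝ (Fin d),
      Measurable F ∧ (0 ≤ t → ∀ᵐ ω ∂P, F (fun q => ξ n q ω) = ξ n t ω) := by
    intro n t
    rcases lt_or_ge t 0 with ht | ht
    · exact ⟨fun _ => 0, measurable_const, fun h => absurd ht (not_lt.2 h)⟩
    obtain ⟨F, hF1, hF2⟩ := exists_factor_through_rationals P (ξ n) t ht fun ε hε => by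
      obtain ⟨h, hh, hs⟩ := hcont (t + 1) (by linarith) ε hε ε hε
      refine ⟨min h 1, lt_min hh one_pos, fun s hs' => ?_⟩
      have h1 : s - t ≤ min h 1 := by linarith [hs'.2]
      refine hs n t ⟨ht, by linarith⟩ s ⟨ht.trans hs'.1, ?_⟩ ?_
      · linarith [min_le_right h 1]
      · rw [abs_of_nonneg (by linarith [hs'.1])]
        exact h1.trans (min_le_left _ _)
    exact ⟨F, hF1, fun _ => hF2⟩
  choose F hFm hFae using hF
  have hpath : ∀ n, Measurable fun ω (q : ℚ≥0) => ξ n q ω := fun n =>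
    measurable_pi_lambda _ fun q => hmeas n q q.cast_nonneg
  have hprob : ∀ n, IsProbabilityMeasure (P.map fun ω (q : ℚ≥0) => ξ n q ω) := fun n =>
    Measure.isProbabilityMeasure_map (hpath n).aemeasurable
  obtain ⟨φ, hφ, X, hXm, hXlaw, hXconv⟩ :=
    exists_coupling ℚ≥0 d fun n => P.map fun ω (q : ℚ≥0) => ξ n q ω
  -- `ξ'` is obtained from the coupled rational paths by the same maps that recover `ξ (φ n) t`
  set P' : Measure ℝ := volume.restrict (Ioo (0 : ℝ) 1) with hP'
  have hP'prob : IsProbabilityMeasure P' := ⟨by simp [hP']⟩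
  set ξ' : ℕ → ℝ → ℝ → EuclideanSpace ℝ (Fin d) := fun n t u => F (φ n) t (X n u) with hξ'
  have hξ'm : ∀ n t, Measurable (ξ' n t) := fun n t => (hFm _ t).comp (hXm n)
  have hfdd : ∀ n, ∀ k : ℕ, ∀ times : Fin k → ℝ, (∀ i, 0 ≤ times i) →
      P.map (fun ω => fun i : Fin k => ξ (φ n) (times i) ω)
        = P'.map (fun ω' => fun i : Fin k => ξ' n (times i) ω') := by
    intro n k times htimes
    have hΦ : Measurable fun x (i : Fin k) => F (φ n) (times i) x :=
      measurable_pi_lambda _ fun i => hFm _ _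
    calc P.map (fun ω => fun i : Fin k => ξ (φ n) (times i) ω)
        = P.map ((fun x (i : Fin k) => F (φ n) (times i) x) ∘ fun ω (q : ℚ≥0) => ξ (φ n) q ω) := by
          refine Measure.map_congr ?_
          filter_upwards [ae_all_iff.2 fun i => hFae (φ n) (times i) (htimes i)] with ω hω
          funext i
          exact (hω i).symm
      _ = (P'.map (X n)).map (fun x (i : Fin k) => F (φ n) (times i) x) := by
          rw [hXlaw, Measure.map_map hΦ (hpath _)]
      _ = _ := Measure.map_map hΦ (hXm n)
  have hincr : ∀ n s t, 0 ≤ s → 0 ≤ t → ∀ ε : ℝ,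
      P'.real {u | ε < ‖ξ' n t u - ξ' n s u‖} = P.real {ω | ε < ‖ξ (φ n) t ω - ξ (φ n) s ω‖} := by
    intro n s t hs ht ε
    have h0 : ∀ i, 0 ≤ (![s, t] : Fin 2 → ℝ) i := by
      intro i; fin_cases i <;> simpa
    have hA : MeasurableSet {y : Fin 2 → EuclideanSpace ℝ (Fin d) | ε < ‖y 1 - y 0‖} :=
      measurableSet_lt measurable_const (by fun_prop)
    have h := congrArg (fun m => m.real {y | ε < ‖y 1 - y 0‖}) (hfdd n 2 ![s, t] h0)
    rw [map_measureReal_apply (measurable_pi_lambda _ fun i => hmeas _ _ (h0 i)) hA,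
      map_measureReal_apply (measurable_pi_lambda _ fun i => hξ'm _ _) hA] at h
    exact h.symm
  -- at rational times `ξ'` agrees almost surely with the coupled path itself
  have hrat : ∀ q : ℚ≥0, ∀ n, ∀ᵐ u ∂P', X n u q = ξ' n q u := by
    intro q n
    have h1 : ∀ᵐ x ∂(P.map fun ω (q : ℚ≥0) => ξ (φ n) q ω), x q = F (φ n) q x := by
      rw [ae_map_iff (hpath _).aemeasurable
        (measurableSet_eq_fun (measurable_pi_apply q) (hFm (φ n) q))]
      filter_upwards [hFae (φ n) q q.cast_nonneg] with ω hω using hω.symm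
    rw [← hXlaw] at h1
    exact ae_of_ae_map (hXm n).aemeasurable h1
  have hXtight : ∀ q : ℚ≥0, ∀ ε > (0 : ℝ), ∃ c : ℝ, ∀ n, P'.real {u | c < ‖X n u q‖} < ε := by
    intro q ε hε
    obtain ⟨c, hc⟩ := hbdd (q + 1) (by positivity) ε hε
    refine ⟨c, fun n => ?_⟩
    have hA : MeasurableSet {x : ℚ≥0 → EuclideanSpace ℝ (Fin d) | c < ‖x q‖} :=
      measurableSet_lt measurable_const (by fun_prop)
    have h := congrArg (fun m => m.real {x | c < ‖x q‖}) (hXlaw n)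
    rw [map_measureReal_apply (hXm n) hA, map_measureReal_apply (hpath _) hA] at h
    exact h.trans_lt (hc (φ n) q ⟨q.cast_nonneg, by linarith⟩)
  have hratC : ∀ q : ℚ≥0, ∀ ε > (0 : ℝ), ∀ δ > (0 : ℝ), ∃ N : ℕ, ∀ n ≥ N, ∀ m ≥ N,
      P'.real {u | ε < ‖ξ' n q u - ξ' m q u‖} < δ := by
    intro q ε hε δ hδ
    have hae := ae_tendsto_of_tight P' (fun n u => X n u q) (hXtight q)
      (hXconv.mono fun u hu => hu q)
    have hm : TendstoInMeasure P' (fun n => ξ' n q) atTop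
        (fun u => limUnder atTop fun n => X n u q) := by
      refine tendstoInMeasure_of_tendsto_ae (fun n => (hξ'm n q).aestronglyMeasurable) ?_
      filter_upwards [hae, ae_all_iff.2 (hrat q)] with u hu hu'
      simpa only [hu'] using tendsto_nhds_limUnder hu
    rw [tendstoInMeasure_iff_measureReal_norm] at hm
    obtain ⟨N, hN⟩ := eventually_atTop.1 ((hm (ε / 2) (by positivity)).eventually
      (gt_mem_nhds (show (0 : ℝ) < δ / 2 by positivity)))
    refine ⟨N, fun n hn m hm' => ?_⟩
    set g : ℝ → EuclideanSpace ℝ (Fin d) := fun u => limUnder atTop fun n => X n u q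
    have hsub : {u | ε < ‖ξ' n q u - ξ' m q u‖} ⊆
        {u | ε / 2 ≤ ‖ξ' n q u - g u‖} ∪ {u | ε / 2 ≤ ‖ξ' m q u - g u‖} := by
      intro u hu
      have hu' : ε < ‖ξ' n q u - ξ' m q u‖ := hu
      by_contra h
      rw [mem_union, not_or] at h
      have h1 : ‖ξ' n q u - g u‖ < ε / 2 := not_le.1 h.1
      have h2 : ‖ξ' m q u - g u‖ < ε / 2 := not_le.1 h.2
      have h3 := norm_sub_le_norm_sub_add_norm_sub (ξ' n q u) (g u) (ξ' m q u)
      rw [norm_sub_rev (g u)] at h3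
      linarith
    calc _ ≤ _ := measureReal_mono hsub
      _ ≤ _ := measureReal_union_le _ _
      _ < δ / 2 + δ / 2 := add_lt_add (hN n hn) (hN m hm')
      _ = δ := add_halves δ
  -- three-`ε` argument through a nearby rational time, uniform in `n`
  have hC : ∀ t, 0 ≤ t → ∀ ε > (0 : ℝ), ∀ δ > (0 : ℝ), ∃ N : ℕ, ∀ n ≥ N, ∀ m ≥ N,
      P'.real {u | ε < ‖ξ' n t u - ξ' m t u‖} < δ := by
    intro t ht ε hε δ hδ
    obtain ⟨h, hh, hs⟩ := hcont (t + 1) (by linarith) (ε / 3) (by positivity) (δ / 3)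
      (by positivity)
    obtain ⟨q₀, hq1, hq2⟩ := exists_rat_btwn (show t < t + min h 1 by
      linarith [lt_min hh one_pos])
    have hq0 : (0 : ℚ) ≤ q₀ := by exact_mod_cast ht.trans hq1.le
    obtain ⟨q, hq⟩ : ∃ q : ℚ≥0, (q : ℝ) = q₀ := ⟨⟨q₀, hq0⟩, rfl⟩
    rw [← hq] at hq1 hq2
    have hnear : ∀ n, P'.real {u | ε / 3 < ‖ξ' n t u - ξ' n q u‖} < δ / 3 := by
      intro n
      rw [hincr n q t q.cast_nonneg ht]
      refine hs (φ n) q ⟨q.cast_nonneg, ?_⟩ t ⟨ht, by linarith⟩ ?_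
      · linarith [min_le_right h 1]
      · rw [abs_of_nonpos (by linarith)]
        linarith [min_le_left h 1]
    obtain ⟨N, hN⟩ := hratC q (ε / 3) (by positivity) (δ / 3) (by positivity)
    refine ⟨N, fun n hn m hm => ?_⟩
    have hsub : {u | ε < ‖ξ' n t u - ξ' m t u‖} ⊆
        ({u | ε / 3 < ‖ξ' n t u - ξ' n q u‖} ∪ {u | ε / 3 < ‖ξ' n q u - ξ' m q u‖}) ∪
          {u | ε / 3 < ‖ξ' m t u - ξ' m q u‖} := by
      intro u hu
      have hu' : ε < ‖ξ' n t u - ξ' m t u‖ := hu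
      by_contra h
      rw [mem_union, mem_union, not_or, not_or] at h
      have h1 : ‖ξ' n t u - ξ' n q u‖ ≤ ε / 3 := not_lt.1 h.1.1
      have h2 : ‖ξ' n q u - ξ' m q u‖ ≤ ε / 3 := not_lt.1 h.1.2
      have h3 : ‖ξ' m t u - ξ' m q u‖ ≤ ε / 3 := not_lt.1 h.2
      have h4 := norm_sub_le_norm_sub_add_norm_sub (ξ' n t u) (ξ' n q u) (ξ' m t u)
      have h5 := norm_sub_le_norm_sub_add_norm_sub (ξ' n q u) (ξ' m q u) (ξ' m t u)
      rw [norm_sub_rev (ξ' m q u)] at h5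
      linarith
    have hle := (measureReal_mono (μ := P') hsub).trans ((measureReal_union_le _ _).trans
      (add_le_add_left (measureReal_union_le _ _) _))
    linarith [hnear n, hnear m, hN n hn m hm]
  have hlim : ∀ t, ∃ g : ℝ → EuclideanSpace ℝ (Fin d), 0 ≤ t → ∀ ε > (0 : ℝ),
      Tendsto (fun n => P'.real {u | ε < ‖ξ' n t u - g u‖}) atTop (𝓝 0) := by
    intro t
    rcases lt_or_ge t 0 with ht | ht
    · exact ⟨fun _ => 0, fun h => absurd ht (not_lt.2 h)⟩
    obtain ⟨g, hg⟩ := exists_limit_in_probability P' (fun n => ξ' n t)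
      (fun n => (hξ'm n t).aestronglyMeasurable) (hC t ht)
    exact ⟨g, fun _ => hg⟩
  choose ξlim hξlim using hlim
  exact ⟨φ, hφ, ℝ, inferInstance, P', hP'prob, ξ', ξlim, hfdd, fun ε hε t ht => hξlim t ht ε hε⟩
end

section
/- Let C > 0 and let v : [0,∞) → [0,2] be a nondecreasing function such that v(t)² ≤ exp(C ∫₀^t v(s)² ds) − 1 for all t ≥ 0. Then v(t) = 0 for all t ≥ 0. -/
/-!
Put `w = v²`, which is nondecreasing with values in `[0, 4]`, and let `δ = 1 / (4C)`. If `v` vanishes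
on `[0, a]` and `a ≤ t ≤ a + δ`, then monotonicity gives `C ∫₀ᵗ w ≤ C δ w(t) = w(t) / 4 ≤ 1`.
Since `exp x - 1 ≤ 2x` on `[0, 1]`, the hypothesis yields `w(t) ≤ w(t) / 2`, so `w(t) = 0`.
Hence the vanishing of `v` propagates by steps of the fixed length `δ`, and covers `[0, ∞)`.
-/

open MeasureTheory

/-- If `v : [0,∞) → [0,2]` is nondecreasing and satisfies
`v(t)² ≤ exp(C ∫₀ᵗ v(s)² ds) − 1` for all `t ≥ 0`, where `C > 0`, then `v ≡ 0` on `[0,∞)`. -/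
theorem stmt_8 (C : ℝ) (hC : 0 < C) (v : ℝ → ℝ)
    (h_range : ∀ t, 0 ≤ t → v t ∈ Set.Icc (0:ℝ) 2)
    (h_mono : MonotoneOn v (Set.Ici (0:ℝ)))
    (h_ineq : ∀ t, 0 ≤ t →
      (v t) ^ 2 ≤ Real.exp (C * ∫ s in (0:ℝ)..t, (v s) ^ 2) - 1) :
    ∀ t, 0 ≤ t → v t = 0 := by
  have hw_mono : MonotoneOn (fun s => (v s) ^ 2) (Set.Ici (0:ℝ)) := fun x hx y hy hxy =>
    pow_le_pow_left₀ (h_range x hx).1 (h_mono hx hy hxy) 2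
  have hint : ∀ a b : ℝ, 0 ≤ a → 0 ≤ b →
      IntervalIntegrable (fun s => (v s) ^ 2) volume a b := fun a b ha hb =>
    (hw_mono.mono fun x hx => le_trans (le_min ha hb) hx.1).intervalIntegrable
  -- The case `a = t = 0` also starts the induction below.
  have step : ∀ a t : ℝ, 0 ≤ a → a ≤ t → t ≤ a + 1 / (4 * C) →
      (∀ s, 0 ≤ s → s < a → v s = 0) → v t = 0 := by
    intro a t ha hat hta hz
    have ht : 0 ≤ t := ha.trans hat
    have h0 : ∫ s in (0:ℝ)..a, (v s) ^ 2 = 0 := by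
      rw [intervalIntegral.integral_of_le ha, integral_Ioc_eq_integral_Ioo]
      rw [setIntegral_congr_fun (g := fun _ => (0:ℝ)) measurableSet_Ioo]
      · simp
      · intro s hs
        simp [hz s hs.1.le hs.2]
    have h1 : ∫ s in a..t, (v s) ^ 2 ≤ (t - a) * (v t) ^ 2 := by
      have := intervalIntegral.integral_mono_on hat (hint a t ha ht)
        (intervalIntegrable_const (c := (v t) ^ 2))
        (fun s hs => hw_mono (ha.trans hs.1) ht hs.2)
      simpa using this
    have h2 := intervalIntegral.integral_add_adjacent_intervals
      (hint 0 a le_rfl ha) (hint a t ha ht)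
    obtain ⟨hv0, hv2⟩ := h_range t ht
    have h3 : C * ∫ s in (0:ℝ)..t, (v s) ^ 2 ≤ (v t) ^ 2 / 4 := by
      rw [← h2, h0, zero_add]
      calc C * ∫ s in a..t, (v s) ^ 2 ≤ C * (1 / (4 * C) * (v t) ^ 2) := by
            gcongr
            exact h1.trans (by gcongr; linarith)
        _ = (v t) ^ 2 / 4 := by field_simp
    have h4 := h_ineq t ht
    have h5 := Real.exp_le_exp.mpr h3
    have hx : |(v t) ^ 2 / 4| = (v t) ^ 2 / 4 := abs_of_nonneg (by positivity)
    have h6 := Real.abs_exp_sub_one_le (x := (v t) ^ 2 / 4) (by rw [hx]; nlinarith)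
    rw [hx] at h6
    have h7 := (le_abs_self _).trans h6
    exact pow_eq_zero_iff two_ne_zero |>.mp (le_antisymm (by linarith) (sq_nonneg _))
  have hδ : 0 < 1 / (4 * C) := by positivity
  have main : ∀ n : ℕ, ∀ t, 0 ≤ t → t ≤ n * (1 / (4 * C)) → v t = 0 := by
    intro n
    induction n with
    | zero =>
      intro t ht ht'
      have : t = 0 := le_antisymm (by simpa using ht') ht
      subst this
      exact step 0 0 le_rfl le_rfl (by linarith) fun s hs hs' => absurd hs (not_le.mpr hs')
    | succ n ih =>
      intro t ht ht'
      rcases le_total t (n * (1 / (4 * C))) with h | h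
      · exact ih t ht h
      · refine step (n * (1 / (4 * C))) t (by positivity) h ?_ fun s hs hs' => ih s hs hs'.le
        push_cast at ht'
        linarith
  intro t ht
  obtain ⟨n, hn⟩ := exists_nat_ge (t / (1 / (4 * C)))
  exact main n t ht ((div_le_iff₀ hδ).mp hn)
end
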